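/- For every integer n ≥ 1 there exist δ > 0 and C > 0 such that for every real k with 0 < k < δ one has |ρ_n(k) − ( ((λ+μ)n(8n³+16n²+4n−1) + μ(2n+1)(4n³+12n²+5n−4)) / ((λ+2μ)(2n+3)(2n+1)²(2n−1)) + k_s² · (−2n(n+1)(4n²+4n+33)) / ((2n+5)(2n+3)(2n+1)³(2n−1)(2n−3)) + k_p² · (−2μ(2n+1)(10n³+15n²−19n−12) + (λ+2μ)(2n+5)(2n−3)) / ((λ+2μ)(2n+5)(2n+3)(2n+1)³(2n−1)(2n−3)) )| ≤ C·k³. -/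

import Mathlib

/-!
Writing `j_m(z) = z ^ m / (2 m + 1)!! * J_m(z ^ 2)` and `y_m(z) = -(2 m - 1)!! z ^ (-m-1) * Y_m(z ^ 2)`,
the coefficients of the power series `J_m` and `Y_m` are `± 1 / (2 ^ p p!)` divided by a product of
odd integers, hence bounded by `2 ^ (-p)`, so that both series agree with their first three terms up
to `O(z ^ 6)` (`evenSeries_isBigO`). Multiplying out, `i z ^ s j_a h_b` equals an explicit
three-term expression up to `O(z ^ 3)` (`jh_isBigO`): the real part `j_b` of `h_b` contributes a term
of order `z ^ (s+a+b)`, which is negligible in all products occurring in `ρ_n`. The one exception is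
`z j_0 h_0`, which is multiplied by `n - 1 = 0`.

By `rhoN_eq`, `ρ_n` is the sum of a combination of six such products at `k_s` and of another one
at `k_p`; the expansion of such a combination is `besselComb_isBigO`. Three terms of each series are needed because `z j_{n-1} h_{n+1}` starts
with `z ^ (-2)`. This singularity disappears from the sum, since `μ k_s ^ 2 = (λ + 2 μ) k_p ^ 2`, and
the remaining coefficients match the stated ones by rational identities in `n`
(`combCoeff_shear`, `combCoeff_pressure`, and the end of the final proof for the constant term).
-/

open Complex

/-- Spherical Bessel function of the first kind (series definition). -/
noncomputable def jb (n : ℕ) (z : ℂ) : ℂ :=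
  ∑' p : ℕ, ((-1 : ℂ) ^ p * z ^ (n + 2 * p)) /
    ((2 : ℂ) ^ p * (Nat.factorial p : ℂ) * ∏ q ∈ Finset.range (n + p + 1), (2 * (q : ℂ) + 1))

/-- Spherical Bessel function of the second kind (series definition). -/
noncomputable def yb (n : ℕ) (z : ℂ) : ℂ :=
  -((Nat.factorial (2 * n) : ℂ) / ((2 : ℂ) ^ n * (Nat.factorial n : ℂ))) *
    ∑' p : ℕ, ((-1 : ℂ) ^ p * z ^ (2 * (p : ℤ) - (n : ℤ) - 1)) /
      ((2 : ℂ) ^ p * (Nat.factorial p : ℂ) *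
        ∏ q ∈ Finset.Icc 1 p, (-2 * (n : ℂ) + 2 * (q : ℂ) - 1))

/-- Spherical Hankel function of the first kind. -/
noncomputable def hb (n : ℕ) (z : ℂ) : ℂ := jb n z + Complex.I * yb n z

noncomputable def xiB (n : ℕ) (z : ℂ) : ℂ := -Complex.I * z * jb n z * hb n z

noncomputable def zetaB (n : ℕ) (z : ℂ) : ℂ :=
  1 / 2 - Complex.I * z ^ 2 * deriv (jb n) z * hb n z

/-- Shear wavenumber k_s = k/√μ, as a complex number. -/
noncomputable def ksC (mu k : ℝ) : ℂ := ((k / Real.sqrt mu : ℝ) : ℂ)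

/-- Pressure wavenumber k_p = k/√(λ+2μ), as a complex number. -/
noncomputable def kpC (lam mu k : ℝ) : ℂ := ((k / Real.sqrt (lam + 2 * mu) : ℝ) : ℂ)

noncomputable def fc1n (lam mu : ℝ) (n : ℕ) (k : ℝ) : ℂ :=
  -2 * ((n : ℂ) - 1) * Complex.I *
      (((n : ℂ) + 1) * ksC mu k * jb (n - 1) (ksC mu k) * hb (n - 1) (ksC mu k) /
          (2 * (n : ℂ) + 1) +
        (mu : ℂ) * (n : ℂ) * kpC lam mu k * jb (n - 1) (kpC lam mu k) * hb (n - 1) (kpC lam mu k) /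
          (((lam : ℂ) + 2 * (mu : ℂ)) * (2 * (n : ℂ) + 1))) +
    Complex.I *
      ((((n : ℂ) + 1) * (ksC mu k) ^ 2 * jb (n - 1) (ksC mu k) * hb n (ksC mu k) +
          (n : ℂ) * (kpC lam mu k) ^ 2 * jb (n - 1) (kpC lam mu k) * hb n (kpC lam mu k)) /
        (2 * (n : ℂ) + 1))

noncomputable def fd1n (lam mu : ℝ) (n : ℕ) (k : ℝ) : ℂ :=
  2 * (n : ℂ) * ((n : ℂ) + 2) * Complex.I *
      (ksC mu k * jb (n - 1) (ksC mu k) * hb (n + 1) (ksC mu k) / (2 * (n : ℂ) + 1) -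
        (mu : ℂ) * kpC lam mu k * jb (n - 1) (kpC lam mu k) * hb (n + 1) (kpC lam mu k) /
          (((lam : ℂ) + 2 * (mu : ℂ)) * (2 * (n : ℂ) + 1))) +
    (n : ℂ) * Complex.I *
      ((-(ksC mu k) ^ 2 * jb (n - 1) (ksC mu k) * hb n (ksC mu k) +
          (kpC lam mu k) ^ 2 * jb (n - 1) (kpC lam mu k) * hb n (kpC lam mu k)) /
        (2 * (n : ℂ) + 1))

noncomputable def fc2n (lam mu : ℝ) (n : ℕ) (k : ℝ) : ℂ :=
  -2 * ((n : ℂ) ^ 2 - 1) * Complex.I *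
      (ksC mu k * jb (n + 1) (ksC mu k) * hb (n - 1) (ksC mu k) / (2 * (n : ℂ) + 1) -
        (mu : ℂ) * kpC lam mu k * jb (n + 1) (kpC lam mu k) * hb (n - 1) (kpC lam mu k) /
          (((lam : ℂ) + 2 * (mu : ℂ)) * (2 * (n : ℂ) + 1))) -
    ((n : ℂ) + 1) * Complex.I *
      ((-(ksC mu k) ^ 2 * jb (n - 1) (ksC mu k) * hb n (ksC mu k) +
          (kpC lam mu k) ^ 2 * jb (n - 1) (kpC lam mu k) * hb n (kpC lam mu k)) /
        (2 * (n : ℂ) + 1))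

noncomputable def fd2n (lam mu : ℝ) (n : ℕ) (k : ℝ) : ℂ :=
  2 * ((n : ℂ) + 2) * Complex.I *
      ((n : ℂ) * ksC mu k * jb (n + 1) (ksC mu k) * hb (n + 1) (ksC mu k) / (2 * (n : ℂ) + 1) +
        (mu : ℂ) * ((n : ℂ) + 1) * kpC lam mu k * jb (n + 1) (kpC lam mu k) *
            hb (n + 1) (kpC lam mu k) /
          (((lam : ℂ) + 2 * (mu : ℂ)) * (2 * (n : ℂ) + 1))) -
    Complex.I *
      (((n : ℂ) * (ksC mu k) ^ 2 * jb (n + 1) (ksC mu k) * hb n (ksC mu k) +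
          ((n : ℂ) + 1) * (kpC lam mu k) ^ 2 * jb (n + 1) (kpC lam mu k) * hb n (kpC lam mu k)) /
        (2 * (n : ℂ) + 1))

/-- The eigenvalue ρₙ(k) of ν·(I/2 + K_{∂B}^{k,*}) acting on Yₙᵐ ν. -/
noncomputable def rhoN (lam mu : ℝ) (n : ℕ) (k : ℝ) : ℂ :=
  ((n : ℂ) * (fc1n lam mu n k + fc2n lam mu n k) +
    ((n : ℂ) + 1) * (fd1n lam mu n k + fd2n lam mu n k)) / (2 * (n : ℂ) + 1)

open Filter Topology Asymptotics

/-! ### Normalised series of the spherical Bessel functions -/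

/-- Normalised Taylor coefficients of `jb m`, in powers of `z ^ 2`. -/
noncomputable def cJ (m p : ℕ) : ℂ :=
  (-1) ^ p / (2 ^ p * (p.factorial : ℂ) * ∏ q ∈ Finset.range p, (2 * ((m + 1 + q : ℕ) : ℂ) + 1))

/-- Normalised Laurent coefficients of `yb m`, in powers of `z ^ 2`. -/
noncomputable def cY (m p : ℕ) : ℂ :=
  (-1) ^ p / (2 ^ p * (p.factorial : ℂ) *
    ∏ q ∈ Finset.Icc 1 p, (-2 * (m : ℂ) + 2 * (q : ℂ) - 1))

/-- The even power series `∑ c p * z ^ (2 p)`. -/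
noncomputable def evenSeries (c : ℕ → ℂ) (z : ℂ) : ℂ := ∑' p, c p * (z ^ 2) ^ p

/-- The double factorial `(2 m + 1)!!`, the leading denominator of `jb m`. -/
noncomputable def aJ (m : ℕ) : ℂ := ∏ q ∈ Finset.range (m + 1), (2 * (q : ℂ) + 1)

/-- The double factorial `(2 m - 1)!!`, written as in `yb m`. -/
noncomputable def bY (m : ℕ) : ℂ :=
  (Nat.factorial (2 * m) : ℂ) / ((2 : ℂ) ^ m * (Nat.factorial m : ℂ))

lemma jb_eq (m : ℕ) (z : ℂ) : jb m z = z ^ m / aJ m * evenSeries (cJ m) z := by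
  unfold jb evenSeries
  rw [← tsum_mul_left]
  refine tsum_congr fun p => ?_
  have : ∏ q ∈ Finset.range (m + p + 1), (2 * (q : ℂ) + 1)
      = aJ m * ∏ q ∈ Finset.range p, (2 * ((m + 1 + q : ℕ) : ℂ) + 1) := by
    rw [show m + p + 1 = (m + 1) + p by ring, Finset.prod_range_add, aJ]
  rw [this, cJ, pow_add, pow_mul]
  simp only [div_eq_mul_inv, mul_inv]
  ring

lemma yb_eq (m : ℕ) {z : ℂ} (hz : z ≠ 0) :
    yb m z = -(bY m) * z ^ (-(m : ℤ) - 1) * evenSeries (cY m) z := by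
  unfold yb evenSeries
  rw [mul_assoc, bY]
  congr 1
  rw [← tsum_mul_left]
  refine tsum_congr fun p => ?_
  have : z ^ (2 * (p : ℤ) - (m : ℤ) - 1) = z ^ (-(m : ℤ) - 1) * (z ^ 2) ^ p := by
    rw [← pow_mul, ← zpow_natCast, ← zpow_add₀ hz]
    congr 1
    push_cast
    ring
  rw [this, cY]
  ring

/-- Every factor in the denominators of the coefficients is an odd integer, hence has modulus at
least one, for negative values as well. -/
lemma one_le_norm_odd (a : ℤ) : 1 ≤ ‖(2 * (a : ℂ) + 1)‖ := by
  have h : (2 * (a : ℂ) + 1) = ((2 * a + 1 : ℤ) : ℂ) := by push_cast; ring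
  rw [h, Complex.norm_intCast]
  have : (1 : ℤ) ≤ |2 * a + 1| := Int.one_le_abs (by omega)
  exact_mod_cast this

lemma odd_ne_zero (a : ℤ) : (2 * (a : ℂ) + 1) ≠ 0 := by
  intro h
  have := one_le_norm_odd a
  rw [h, norm_zero] at this
  linarith

lemma norm_coeff_le (p : ℕ) (P : ℂ) (hP : 1 ≤ ‖P‖) :
    ‖(-1 : ℂ) ^ p / (2 ^ p * (p.factorial : ℂ) * P)‖ ≤ (1 / 2) ^ p := by
  have h1 : (1 : ℝ) ≤ p.factorial := by exact_mod_cast p.factorial_pos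
  simp only [norm_div, norm_pow, norm_neg, norm_one, one_pow, norm_mul, Complex.norm_ofNat,
    Complex.norm_natCast, div_pow]
  have : (2 : ℝ) ^ p ≤ 2 ^ p * p.factorial * ‖P‖ := by
    rw [mul_assoc]
    exact le_mul_of_one_le_right (by positivity) (one_le_mul_of_one_le_of_one_le h1 hP)
  exact one_div_le_one_div_of_le (by positivity) this

lemma one_le_prod_norm (s : Finset ℕ) (f : ℕ → ℂ) (h : ∀ q ∈ s, 1 ≤ ‖f q‖) :
    1 ≤ ‖∏ q ∈ s, f q‖ := by
  rw [norm_prod]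
  calc (1 : ℝ) = ∏ q ∈ s, 1 := by simp
    _ ≤ _ := Finset.prod_le_prod (by simp) h

lemma norm_cJ_le (m p : ℕ) : ‖cJ m p‖ ≤ (1 / 2) ^ p := by
  refine norm_coeff_le p _ (one_le_prod_norm _ _ fun q _ => ?_)
  exact_mod_cast one_le_norm_odd ((m + 1 + q : ℕ) : ℤ)

lemma norm_cY_le (m p : ℕ) : ‖cY m p‖ ≤ (1 / 2) ^ p := by
  refine norm_coeff_le p _ (one_le_prod_norm _ _ fun q _ => ?_)
  convert one_le_norm_odd (-(m : ℤ) + q - 1) using 2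
  push_cast
  ring

/-! ### Expansion of the normalised series and of their products -/

/-- Third-order (in `z ^ 2`) Taylor expansion of an even series with geometric coefficients. -/
lemma evenSeries_isBigO (c : ℕ → ℂ) (hc : ∀ p, ‖c p‖ ≤ (1 / 2) ^ p) :
    (fun z => evenSeries c z - (c 0 + c 1 * z ^ 2 + c 2 * z ^ 4)) =O[𝓝 0] fun z : ℂ => z ^ 6 := by
  refine IsBigO.of_bound 2 ?_
  filter_upwards [Metric.ball_mem_nhds (0 : ℂ) one_pos] with z hz
  have hz1 : ‖z‖ ≤ 1 := by
    rw [mem_ball_zero_iff] at hz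
    exact hz.le
  have hb : ∀ i p, ‖c (p + i) * (z ^ 2) ^ p‖ ≤ (1 / 2) ^ p := fun i p => by
    rw [norm_mul, norm_pow, norm_pow]
    calc ‖c (p + i)‖ * (‖z‖ ^ 2) ^ p ≤ (1 / 2) ^ (p + i) * 1 :=
          mul_le_mul (hc _) (pow_le_one₀ (by positivity) (pow_le_one₀ (norm_nonneg _) hz1))
            (by positivity) (by positivity)
      _ ≤ (1 / 2) ^ p := by
          rw [mul_one]
          exact pow_le_pow_of_le_one (by norm_num) (by norm_num) (by omega)
  have hs : Summable fun p => c p * (z ^ 2) ^ p :=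
    Summable.of_norm_bounded summable_geometric_two (hb 0)
  have h3 := hs.sum_add_tsum_nat_add 3
  have : evenSeries c z - (c 0 + c 1 * z ^ 2 + c 2 * z ^ 4)
      = z ^ 6 * ∑' p, c (p + 3) * (z ^ 2) ^ p := by
    rw [evenSeries, ← h3, ← tsum_mul_left, Finset.sum_range_succ, Finset.sum_range_succ,
      Finset.sum_range_one]
    have : ∀ p, c (p + 3) * (z ^ 2) ^ (p + 3) = z ^ 6 * (c (p + 3) * (z ^ 2) ^ p) := fun p => by
      ring
    simp only [this]
    ring
  rw [this, norm_mul, mul_comm]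
  gcongr
  exact tsum_of_norm_bounded hasSum_geometric_two (hb 3)

/-! ### Explicit leading coefficients -/

lemma aJ_succ (m : ℕ) : aJ (m + 1) = aJ m * (2 * m + 3) := by
  rw [aJ, Finset.prod_range_succ, ← aJ]
  push_cast
  ring

lemma bY_succ (m : ℕ) : bY (m + 1) = bY m * (2 * m + 1) := by
  have h1 : (m.factorial : ℂ) ≠ 0 := by exact_mod_cast m.factorial_ne_zero
  have h2 : (m : ℂ) + 1 ≠ 0 := by exact_mod_cast m.succ_ne_zero
  rw [bY, bY, show 2 * (m + 1) = 2 * m + 1 + 1 by ring, Nat.factorial_succ, Nat.factorial_succ,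
    Nat.factorial_succ]
  push_cast
  field_simp
  ring

lemma aJ_eq (m : ℕ) : aJ m = (2 * m + 1) * bY m := by
  induction m with
  | zero => simp [aJ, bY]
  | succ k ih =>
    rw [aJ_succ, ih, bY_succ]
    push_cast
    ring

lemma bY_ne_zero (m : ℕ) : bY m ≠ 0 := by
  unfold bY
  have h1 : (m.factorial : ℂ) ≠ 0 := by exact_mod_cast m.factorial_ne_zero
  have h2 : ((2 * m).factorial : ℂ) ≠ 0 := by exact_mod_cast (2 * m).factorial_ne_zero
  exact div_ne_zero h2 (mul_ne_zero (pow_ne_zero _ two_ne_zero) h1)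

/-- The coefficient of `z ^ 2` in the product of the normalised series of `jb a` and `yb b`. -/
noncomputable def e₁ (a b : ℕ) : ℂ := cJ a 1 + cY b 1

/-- The coefficient of `z ^ 4` in the product of the normalised series of `jb a` and `yb b`. -/
noncomputable def e₂ (a b : ℕ) : ℂ := cJ a 2 + cJ a 1 * cY b 1 + cY b 2

lemma cJ_zero (m : ℕ) : cJ m 0 = 1 := by simp [cJ]
lemma cY_zero (m : ℕ) : cY m 0 = 1 := by simp [cY]
lemma cJ_one (m : ℕ) : cJ m 1 = -1 / (2 * (2 * m + 3)) := by
  simp [cJ]; congr 2; ring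
lemma cY_one (m : ℕ) : cY m 1 = -1 / (2 * (-2 * m + 1)) := by
  simp [cY]; congr 2; ring
lemma cJ_two (m : ℕ) : cJ m 2 = 1 / (8 * ((2 * m + 3) * (2 * m + 5))) := by
  rw [cJ]
  congr 1
  · norm_num
  · simp only [Finset.prod_range_succ, Finset.prod_range_zero, Nat.factorial]
    push_cast
    ring
lemma cY_two (m : ℕ) : cY m 2 = 1 / (8 * ((-2 * m + 1) * (-2 * m + 3))) := by
  rw [cY]
  congr 1
  · norm_num
  · simp only [Finset.prod_Icc_succ_top (show 1 ≤ 1 + 1 by norm_num), Finset.Icc_self,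
      Finset.prod_singleton, Nat.factorial]
    push_cast
    ring

/-! ### Expansion of the products `z ^ s j_a h_b` -/

lemma pow_isBigO_pow {k l : ℕ} (h : k ≤ l) : (fun z : ℂ => z ^ l) =O[𝓝 0] fun z => z ^ k := by
  refine IsBigO.of_bound 1 ?_
  filter_upwards [Metric.ball_mem_nhds (0 : ℂ) one_pos] with z hz
  rw [mem_ball_zero_iff] at hz
  rw [norm_pow, norm_pow, one_mul]
  exact pow_le_pow_of_le_one (norm_nonneg _) hz.le h

lemma continuous_isBigO_one {f : ℂ → ℂ} (hf : Continuous f) : f =O[𝓝 0] fun _ => (1 : ℂ) :=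
  (hf.tendsto 0).isBigO_one ℂ

lemma evenSeries_isBigO_one (c : ℕ → ℂ) (hc : ∀ p, ‖c p‖ ≤ (1 / 2) ^ p) :
    evenSeries c =O[𝓝 0] fun _ => (1 : ℂ) := by
  have h1 := (evenSeries_isBigO c hc).trans
    (continuous_isBigO_one (f := fun z => z ^ 6) (by fun_prop))
  have h2 : (fun z => c 0 + c 1 * z ^ 2 + c 2 * z ^ 4) =O[𝓝 0] fun _ => (1 : ℂ) :=
    continuous_isBigO_one (by fun_prop)
  refine (h1.add h2).congr_left fun z => ?_
  ring

lemma jb_isBigO (m : ℕ) : jb m =O[𝓝 0] fun z => z ^ m := by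
  have h := ((isBigO_refl (fun z : ℂ => z ^ m) (𝓝 0)).mul
    (evenSeries_isBigO_one (cJ m) (norm_cJ_le m))).const_mul_left (aJ m)⁻¹
  refine (h.congr_left fun z => ?_).congr_right fun z => mul_one _
  rw [jb_eq]
  ring

/-- Expansion of the product of the normalised series of `jb a` and `yb b`. -/
lemma product_isBigO (a b : ℕ) :
    (fun z => evenSeries (cJ a) z * evenSeries (cY b) z - (1 + e₁ a b * z ^ 2 + e₂ a b * z ^ 4))
      =O[𝓝 0] fun z : ℂ => z ^ 6 := by
  have hJ := evenSeries_isBigO (cJ a) (norm_cJ_le a)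
  have hY := evenSeries_isBigO (cY b) (norm_cY_le b)
  have hJ1 := evenSeries_isBigO_one (cJ a) (norm_cJ_le a)
  have hP : (fun z : ℂ => cY b 0 + cY b 1 * z ^ 2 + cY b 2 * z ^ 4) =O[𝓝 0] fun _ => (1 : ℂ) :=
    continuous_isBigO_one (by fun_prop)
  have h1 := (hJ1.mul hY).congr_right fun z => one_mul _
  have h2 := (hP.mul hJ).congr_right fun z => one_mul _
  have hQ : (fun z : ℂ => cJ a 1 * cY b 2 + cJ a 2 * cY b 1 + cJ a 2 * cY b 2 * z ^ 2) =O[𝓝 0]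
      fun _ => (1 : ℂ) := continuous_isBigO_one (by fun_prop)
  have h3 := (hQ.mul (isBigO_refl (fun z : ℂ => z ^ 6) (𝓝 0))).congr_right fun z => one_mul _
  refine ((h1.add h2).add h3).congr_left fun z => ?_
  simp only [cJ_zero, cY_zero, e₁, e₂]
  ring

/-- Expansion of `z ^ s j_a(z) h_b(z)` for `s + a - b - 1 = T - 2`. The term `z ^ s j_a j_b`
coming from the real part of `h_b` is of order `s + a + b`, hence negligible. -/
lemma jh_isBigO (s a b T : ℕ) (hT : s + a + 2 = b + 1 + T) (h3 : 3 ≤ s + a + b) :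
    (fun z => I * (z ^ s * jb a z * hb b z) -
      bY b / aJ a * z ^ T * (z ^ 2)⁻¹ * (1 + e₁ a b * z ^ 2 + e₂ a b * z ^ 4))
      =O[𝓝[≠] 0] fun z : ℂ => z ^ 3 := by
  have h1 : (fun z => I * (z ^ s * jb a z * jb b z)) =O[𝓝[≠] 0] fun z : ℂ => z ^ 3 := by
    have h := (((isBigO_refl (fun z : ℂ => z ^ s) (𝓝 0)).mul (jb_isBigO a)).mul
      (jb_isBigO b)).const_mul_left I
    have h' := h.congr_right (g₂ := fun z : ℂ => z ^ (s + a + b)) fun z => by ring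
    exact (h'.trans (pow_isBigO_pow h3)).mono nhdsWithin_le_nhds
  have h2 := ((continuous_isBigO_one (f := fun z : ℂ => bY b / aJ a * z ^ T)
    (by fun_prop)).mul (product_isBigO a b)).mono
      (nhdsWithin_le_nhds (s := {(0 : ℂ)}ᶜ))
  have h4 := (isBigO_refl (fun z : ℂ => (z ^ 2)⁻¹) (𝓝[≠] 0)).mul h2
  have h5 : (fun z : ℂ => (z ^ 2)⁻¹ * (1 * z ^ 6)) =O[𝓝[≠] 0] fun z => z ^ 3 := by
    refine IsBigO.congr' ((pow_isBigO_pow (show 3 ≤ 4 by norm_num)).mono nhdsWithin_le_nhds)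
      ?_ EventuallyEq.rfl
    filter_upwards [self_mem_nhdsWithin] with z hz
    have hz : z ≠ 0 := hz
    field_simp
  refine (h1.add (h4.trans h5)).congr' ?_ EventuallyEq.rfl
  filter_upwards [self_mem_nhdsWithin] with z hz
  have hz : z ≠ 0 := hz
  have hpow : z ^ s * z ^ a * z ^ (-(b : ℤ) - 1) = z ^ T * (z ^ 2)⁻¹ := by
    have : z ^ (-(b : ℤ) - 1) = (z ^ (b + 1))⁻¹ := by
      rw [← zpow_natCast, ← zpow_neg]
      congr 1
      push_cast
      ring
    rw [this]
    field_simp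
    rw [← pow_add, ← pow_add, ← pow_add, hT]
  have hmain : I * (z ^ s * jb a z * (I * yb b z)) =
      bY b / aJ a * (z ^ T * (z ^ 2)⁻¹) * (evenSeries (cJ a) z * evenSeries (cY b) z) := by
    rw [← hpow, jb_eq, yb_eq b hz]
    linear_combination (-(z ^ s * (z ^ a / aJ a * evenSeries (cJ a) z) * (bY b *
      z ^ (-(b : ℤ) - 1) * evenSeries (cY b) z))) * I_sq
  rw [hb]
  linear_combination -hmain

/-- Case `T = 0`, where the product is singular like `z ^ (-2)`. -/
lemma jh_isBigO_zero (s a b : ℕ) (hT : s + a + 2 = b + 1) (h3 : 3 ≤ s + a + b) :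
    (fun z => I * (z ^ s * jb a z * hb b z) -
      bY b / aJ a * ((z ^ 2)⁻¹ + e₁ a b + e₂ a b * z ^ 2)) =O[𝓝[≠] 0] fun z : ℂ => z ^ 3 := by
  refine (jh_isBigO s a b 0 hT h3).congr' ?_ EventuallyEq.rfl
  filter_upwards [self_mem_nhdsWithin] with z hz
  have hz : z ≠ 0 := hz
  congr 1
  field_simp

/-- Case `T = 2`, where the product tends to a nonzero constant; the `z ^ 4` term is dropped. -/
lemma jh_isBigO_two (s a b : ℕ) (hT : s + a = b + 1) (h3 : 3 ≤ s + a + b) :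
    (fun z => I * (z ^ s * jb a z * hb b z) - bY b / aJ a * (1 + e₁ a b * z ^ 2))
      =O[𝓝[≠] 0] fun z : ℂ => z ^ 3 := by
  have h4 : (fun z : ℂ => bY b / aJ a * e₂ a b * z ^ 4) =O[𝓝[≠] 0] fun z => z ^ 3 :=
    ((pow_isBigO_pow (show 3 ≤ 4 by norm_num)).const_mul_left _).mono nhdsWithin_le_nhds
  refine ((jh_isBigO s a b 2 (by omega) h3).add h4).congr' ?_ EventuallyEq.rfl
  filter_upwards [self_mem_nhdsWithin] with z hz
  have hz : z ≠ 0 := hz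
  rw [mul_assoc _ (z ^ 2), mul_inv_cancel₀ (pow_ne_zero 2 hz)]
  ring

/-- Case `T = 4`, where the product is of order `z ^ 2`; the higher terms are dropped. -/
lemma jh_isBigO_four (s a b : ℕ) (hT : s + a = b + 3) (h3 : 3 ≤ s + a + b) :
    (fun z => I * (z ^ s * jb a z * hb b z) - bY b / aJ a * z ^ 2)
      =O[𝓝[≠] 0] fun z : ℂ => z ^ 3 := by
  have h4 : (fun z : ℂ => bY b / aJ a * (e₁ a b + e₂ a b * z ^ 2) * z ^ 4)
      =O[𝓝[≠] 0] fun z => z ^ 3 := by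
    have h := (continuous_isBigO_one (f := fun z => bY b / aJ a * (e₁ a b + e₂ a b * z ^ 2))
      (by fun_prop)).mul (pow_isBigO_pow (show 3 ≤ 4 by norm_num))
    exact (h.congr_right fun z => one_mul _).mono nhdsWithin_le_nhds
  refine ((jh_isBigO s a b 4 (by omega) h3).add h4).congr' ?_ EventuallyEq.rfl
  filter_upwards [self_mem_nhdsWithin] with z hz
  have hz : z ≠ 0 := hz
  have : z ^ 4 * (z ^ 2)⁻¹ = z ^ 2 := by field_simp
  rw [mul_assoc _ (z ^ 4), this]
  ring

/-! ### Linear combinations of Bessel products -/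

/-- The general combination of Bessel products occurring in `rhoN`, with `n = m + 1`. The factor
`m` in the first term kills the contribution of order `z` that `i z j_0 h_0` would give. -/
noncomputable def besselComb (m : ℕ) (α β γ δ ε φ z : ℂ) : ℂ :=
  I * (α * m * (z * jb m z * hb m z) + β * (z ^ 2 * jb m z * hb (m + 1) z) +
    γ * (z * jb m z * hb (m + 2) z) + δ * (z * jb (m + 2) z * hb m z) +
    ε * (z * jb (m + 2) z * hb (m + 2) z) + φ * (z ^ 2 * jb (m + 2) z * hb (m + 1) z))

/-- The coefficient of `z ^ 2` in the expansion of `besselComb`. -/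
noncomputable def combCoeff (m : ℂ) (α β γ δ ε φ : ℂ) : ℂ :=
  α * m / (2 * m + 1) * (-1 / (2 * (2 * m + 3)) + 1 / (2 * (2 * m - 1))) +
  β * (-1 / (2 * (2 * m + 3)) + 1 / (2 * (2 * m + 1))) +
  γ * (2 * m + 3) * (1 / (8 * (2 * m + 3) * (2 * m + 5)) -
    1 / (2 * (2 * m + 3)) * (1 / (2 * (2 * m + 3))) +
    1 / (8 * (2 * m + 3) * (2 * m + 1))) +
  δ / ((2 * m + 1) * (2 * m + 3) * (2 * m + 5)) +
  ε / (2 * m + 5) * (-1 / (2 * (2 * m + 7)) + 1 / (2 * (2 * m + 3))) +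
  φ / ((2 * m + 3) * (2 * m + 5))

lemma odd_cast_ne_zero (m : ℕ) : (2 * (m : ℂ) + 1) ≠ 0 ∧ (2 * (m : ℂ) + 3) ≠ 0 ∧
    (2 * (m : ℂ) + 5) ≠ 0 ∧ (2 * (m : ℂ) + 7) ≠ 0 ∧ (2 * (m : ℂ) - 1) ≠ 0 := by
  have h (a : ℤ) := odd_ne_zero ((m : ℤ) + a)
  refine ⟨?_, ?_, ?_, ?_, ?_⟩
  · convert h 0 using 1; push_cast; ring
  · convert h 1 using 1; push_cast; ring
  · convert h 2 using 1; push_cast; ring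
  · convert h 3 using 1; push_cast; ring
  · convert h (-1) using 1; push_cast; ring

/-- Expansion of `besselComb` with error `O(z ^ 3)`. There is no constant contribution of `γ`
because `e₁ m (m + 2) = 0`. -/
lemma besselComb_isBigO (m : ℕ) (α β γ δ ε φ : ℂ) :
    (fun z => besselComb m α β γ δ ε φ z - (γ * (2 * m + 3) * (z ^ 2)⁻¹ +
      (α * m / (2 * m + 1) + β + ε / (2 * m + 5)) + combCoeff m α β γ δ ε φ * z ^ 2))
      =O[𝓝[≠] 0] fun z : ℂ => z ^ 3 := by
  have hA : (fun z => (m : ℂ) * (I * (z ^ 1 * jb m z * hb m z) -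
      bY m / aJ m * (1 + e₁ m m * z ^ 2))) =O[𝓝[≠] 0] fun z : ℂ => z ^ 3 := by
    rcases Nat.eq_zero_or_pos m with rfl | hm
    · simpa using isBigO_zero _ _
    · exact (jh_isBigO_two 1 m m (by omega) (by omega)).const_mul_left _
  have hB := jh_isBigO_two 2 m (m + 1) (by omega) (by omega)
  have hC := jh_isBigO_zero 1 m (m + 2) (by omega) (by omega)
  have hD := jh_isBigO_four 1 (m + 2) m (by omega) (by omega)
  have hE := jh_isBigO_two 1 (m + 2) (m + 2) (by omega) (by omega)
  have hF := jh_isBigO_four 2 (m + 2) (m + 1) (by omega) (by omega)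
  refine ((((((hA.const_mul_left α).add (hB.const_mul_left β)).add (hC.const_mul_left γ)).add
    (hD.const_mul_left δ)).add (hE.const_mul_left ε)).add (hF.const_mul_left φ)).congr_left
    fun z => ?_
  obtain ⟨h1, h3, h5, h7, h_1⟩ := odd_cast_ne_zero m
  have hbne := bY_ne_zero m
  have hb1 : bY (m + 1) = bY m * (2 * m + 1) := bY_succ m
  have hb2 : bY (m + 2) = bY m * (2 * m + 1) * (2 * m + 3) := by
    rw [bY_succ, hb1]
    push_cast
    ring
  have ha : aJ m = (2 * m + 1) * bY m := aJ_eq m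
  have ha2 : aJ (m + 2) = (2 * m + 5) * (bY m * (2 * m + 1) * (2 * m + 3)) := by
    rw [aJ_eq, hb2]
    push_cast
    ring
  have kA : bY m / aJ m = 1 / (2 * m + 1) := by rw [ha]; field_simp
  have kB : bY (m + 1) / aJ m = 1 := by rw [ha, hb1]; field_simp
  have kC : bY (m + 2) / aJ m = 2 * m + 3 := by rw [ha, hb2]; field_simp
  have kD : bY m / aJ (m + 2) = 1 / ((2 * m + 1) * (2 * m + 3) * (2 * m + 5)) := by
    rw [ha2]; field_simp
  have kE : bY (m + 2) / aJ (m + 2) = 1 / (2 * m + 5) := by rw [ha2, hb2]; field_simp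
  have kF : bY (m + 1) / aJ (m + 2) = 1 / ((2 * m + 3) * (2 * m + 5)) := by
    rw [ha2, hb1]; field_simp
  -- The coefficients `cY` carry the denominators `-2 b + 1`; here they are normalised.
  have y0 : cY m 1 = 1 / (2 * (2 * m - 1)) := by
    rw [cY_one, ← neg_div_neg_eq]; congr 1 <;> ring
  have y1 : cY (m + 1) 1 = 1 / (2 * (2 * m + 1)) := by
    rw [cY_one, ← neg_div_neg_eq]; push_cast; congr 1 <;> ring
  have y2 : cY (m + 2) 1 = 1 / (2 * (2 * m + 3)) := by
    rw [cY_one, ← neg_div_neg_eq]; push_cast; congr 1 <;> ring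
  have y22 : cY (m + 2) 2 = 1 / (8 * (2 * m + 3) * (2 * m + 1)) := by
    rw [cY_two]; push_cast; congr 1; ring
  have j2 : cJ (m + 2) 1 = -1 / (2 * (2 * m + 7)) := by
    rw [cJ_one]; push_cast; congr 1; ring
  rw [kA, kB, kC, kD, kE, kF, e₁, e₁, e₁, e₁, e₂, y0, y1, y2, y22, j2, cJ_one, cJ_two,
    besselComb, combCoeff]
  ring

/-- Passage from a complex variable `z → 0` to the wavenumber `z = k / c`, `k → 0+`. -/
lemma scale_isBigO {f : ℂ → ℂ} (hf : f =O[𝓝[≠] 0] fun z : ℂ => z ^ 3) {c : ℝ} (hc : 0 < c) :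
    (fun k : ℝ => f ((k / c : ℝ) : ℂ)) =O[𝓝[>] 0] fun k : ℝ => k ^ 3 := by
  have ht : Tendsto (fun k : ℝ => ((k / c : ℝ) : ℂ)) (𝓝[>] 0) (𝓝[≠] 0) := by
    refine tendsto_nhdsWithin_iff.2 ⟨?_, ?_⟩
    · have : Continuous fun k : ℝ => ((k / c : ℝ) : ℂ) := by fun_prop
      have h := this.tendsto 0
      simp only [zero_div, Complex.ofReal_zero] at h
      exact h.mono_left nhdsWithin_le_nhds
    · filter_upwards [self_mem_nhdsWithin] with k hk
      have hk : 0 < k := hk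
      exact Complex.ofReal_ne_zero.2 (div_pos hk hc).ne'
  refine (hf.comp_tendsto ht).trans (IsBigO.of_bound ((1 / c) ^ 3) (Eventually.of_forall
    fun k => ?_))
  simp only [Function.comp_apply, norm_pow, Complex.norm_real, norm_div, Real.norm_of_nonneg hc.le]
  rw [div_pow, div_pow]
  apply le_of_eq
  ring

/-! ### The eigenvalue `rhoN` -/

/-- `rhoN` is the sum of a function of the shear wavenumber and one of the pressure wavenumber. -/
lemma rhoN_eq (lam mu : ℝ) (m : ℕ) (k : ℝ) :
    rhoN lam mu (m + 1) k =
      besselComb m (-2 * (m + 1) * (m + 2) / (2 * m + 3) ^ 2)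
        ((m + 1) * (m + 2) / (2 * m + 3) ^ 2)
        (2 * (m + 1) * (m + 2) * (m + 3) / (2 * m + 3) ^ 2)
        (-2 * (m + 1) * (m * (m + 2)) / (2 * m + 3) ^ 2)
        (2 * (m + 1) * (m + 2) * (m + 3) / (2 * m + 3) ^ 2)
        (-(m + 1) * (m + 2) / (2 * m + 3) ^ 2) (ksC mu k) +
      besselComb m (-2 * (m + 1) ^ 2 * (mu / (lam + 2 * mu)) / (2 * m + 3) ^ 2)
        ((m + 1) ^ 2 / (2 * m + 3) ^ 2)
        (-2 * (m + 1) * (m + 2) * (m + 3) * (mu / (lam + 2 * mu)) / (2 * m + 3) ^ 2)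
        (2 * (m + 1) * (m * (m + 2)) * (mu / (lam + 2 * mu)) / (2 * m + 3) ^ 2)
        (2 * (m + 2) ^ 2 * (m + 3) * (mu / (lam + 2 * mu)) / (2 * m + 3) ^ 2)
        (-(m + 2) ^ 2 / (2 * m + 3) ^ 2) (kpC lam mu k) := by
  obtain ⟨-, h3, -⟩ := odd_cast_ne_zero m
  have hN : 2 * ((m : ℂ) + 1) + 1 = 2 * m + 3 := by ring
  unfold rhoN fc1n fd1n fc2n fd2n besselComb
  simp only [Nat.add_sub_cancel, Nat.cast_add, Nat.cast_one, hN, show m + 1 + 1 = m + 2 from rfl]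
  generalize jb m (ksC mu k) = a0
  generalize jb (m + 2) (ksC mu k) = a2
  generalize hb m (ksC mu k) = b0
  generalize hb (m + 1) (ksC mu k) = b1
  generalize hb (m + 2) (ksC mu k) = b2
  generalize jb m (kpC lam mu k) = c0
  generalize jb (m + 2) (kpC lam mu k) = c2
  generalize hb m (kpC lam mu k) = d0
  generalize hb (m + 1) (kpC lam mu k) = d1
  generalize hb (m + 2) (kpC lam mu k) = d2
  generalize ksC mu k = s
  generalize kpC lam mu k = p
  generalize (lam : ℂ) + 2 * mu = L at *
  generalize 2 * (m : ℂ) + 3 = N at *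
  simp only [div_eq_mul_inv, mul_inv]
  ring

/-- The coefficient of `k_s ^ 2` in the stated expansion. -/
lemma combCoeff_shear (m : ℕ) :
    combCoeff m (-2 * (m + 1) * (m + 2) / (2 * m + 3) ^ 2)
        ((m + 1) * (m + 2) / (2 * m + 3) ^ 2)
        (2 * (m + 1) * (m + 2) * (m + 3) / (2 * m + 3) ^ 2)
        (-2 * (m + 1) * (m * (m + 2)) / (2 * m + 3) ^ 2)
        (2 * (m + 1) * (m + 2) * (m + 3) / (2 * m + 3) ^ 2)
        (-(m + 1) * (m + 2) / (2 * m + 3) ^ 2) =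
      -2 * (m + 1) * (m + 2) * (4 * ((m : ℂ) + 1) ^ 2 + 4 * (m + 1) + 33) /
        ((2 * m + 7) * (2 * m + 5) * (2 * m + 3) ^ 3 * (2 * m + 1) * (2 * m - 1)) := by
  obtain ⟨h1, h3, h5, h7, h_1⟩ := odd_cast_ne_zero m
  unfold combCoeff
  field_simp
  ring

/-- The coefficient of `k_p ^ 2` in the stated expansion, with `r = μ / (λ + 2 μ)`. -/
lemma combCoeff_pressure (m : ℕ) (r : ℂ) :
    combCoeff m (-2 * (m + 1) ^ 2 * r / (2 * m + 3) ^ 2)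
        ((m + 1) ^ 2 / (2 * m + 3) ^ 2)
        (-2 * (m + 1) * (m + 2) * (m + 3) * r / (2 * m + 3) ^ 2)
        (2 * (m + 1) * (m * (m + 2)) * r / (2 * m + 3) ^ 2)
        (2 * (m + 2) ^ 2 * (m + 3) * r / (2 * m + 3) ^ 2)
        (-(m + 2) ^ 2 / (2 * m + 3) ^ 2) =
      (-2 * r * (2 * m + 3) *
          (10 * ((m : ℂ) + 1) ^ 3 + 15 * (m + 1) ^ 2 - 19 * (m + 1) - 12) +
        (2 * m + 7) * (2 * m - 1)) /
        ((2 * m + 7) * (2 * m + 5) * (2 * m + 3) ^ 3 * (2 * m + 1) * (2 * m - 1)) := by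
  obtain ⟨h1, h3, h5, h7, h_1⟩ := odd_cast_ne_zero m
  unfold combCoeff
  field_simp
  ring

/-- Asymptotic expansion of ρₙ(k) (n ≥ 1) up to second order with O(k³) remainder. -/
theorem rhoN_asymptotic (lam mu : ℝ) (hmu : 0 < mu) (hlm : 0 < 3 * lam + 2 * mu)
    (n : ℕ) (hn : 1 ≤ n) :
    ∃ δ > (0 : ℝ), ∃ C > (0 : ℝ), ∀ k : ℝ, 0 < k → k < δ →
      ‖rhoN lam mu n k -
          ((((lam : ℂ) + (mu : ℂ)) * (n : ℂ) *
                (8 * (n : ℂ) ^ 3 + 16 * (n : ℂ) ^ 2 + 4 * (n : ℂ) - 1) +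
              (mu : ℂ) * (2 * (n : ℂ) + 1) *
                (4 * (n : ℂ) ^ 3 + 12 * (n : ℂ) ^ 2 + 5 * (n : ℂ) - 4)) /
            (((lam : ℂ) + 2 * (mu : ℂ)) * (2 * (n : ℂ) + 3) * (2 * (n : ℂ) + 1) ^ 2 *
              (2 * (n : ℂ) - 1)) +
          (ksC mu k) ^ 2 *
            (-2 * (n : ℂ) * ((n : ℂ) + 1) * (4 * (n : ℂ) ^ 2 + 4 * (n : ℂ) + 33)) /
            ((2 * (n : ℂ) + 5) * (2 * (n : ℂ) + 3) * (2 * (n : ℂ) + 1) ^ 3 *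
              (2 * (n : ℂ) - 1) * (2 * (n : ℂ) - 3)) +
          (kpC lam mu k) ^ 2 *
            (-2 * (mu : ℂ) * (2 * (n : ℂ) + 1) *
                (10 * (n : ℂ) ^ 3 + 15 * (n : ℂ) ^ 2 - 19 * (n : ℂ) - 12) +
              ((lam : ℂ) + 2 * (mu : ℂ)) * (2 * (n : ℂ) + 5) * (2 * (n : ℂ) - 3)) /
            (((lam : ℂ) + 2 * (mu : ℂ)) * (2 * (n : ℂ) + 5) * (2 * (n : ℂ) + 3) *
              (2 * (n : ℂ) + 1) ^ 3 * (2 * (n : ℂ) - 1) * (2 * (n : ℂ) - 3)))‖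
        ≤ C * k ^ 3 := by
  obtain ⟨m, rfl⟩ : ∃ m, n = m + 1 := ⟨n - 1, by omega⟩
  have hL : 0 < lam + 2 * mu := by linarith
  have hLC : (lam : ℂ) + 2 * mu ≠ 0 := by exact_mod_cast hL.ne'
  have hmuC : (mu : ℂ) ≠ 0 := by exact_mod_cast hmu.ne'
  obtain ⟨h1, h3, h5, h7, h_1⟩ := odd_cast_ne_zero m
  have hs := scale_isBigO (besselComb_isBigO m (-2 * (m + 1) * (m + 2) / (2 * m + 3) ^ 2)
        ((m + 1) * (m + 2) / (2 * m + 3) ^ 2)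
        (2 * (m + 1) * (m + 2) * (m + 3) / (2 * m + 3) ^ 2)
        (-2 * (m + 1) * (m * (m + 2)) / (2 * m + 3) ^ 2)
        (2 * (m + 1) * (m + 2) * (m + 3) / (2 * m + 3) ^ 2)
        (-(m + 1) * (m + 2) / (2 * m + 3) ^ 2)) (Real.sqrt_pos.2 hmu)
  have hp := scale_isBigO (besselComb_isBigO m
        (-2 * (m + 1) ^ 2 * (mu / (lam + 2 * mu)) / (2 * m + 3) ^ 2)
        ((m + 1) ^ 2 / (2 * m + 3) ^ 2)
        (-2 * (m + 1) * (m + 2) * (m + 3) * (mu / (lam + 2 * mu)) / (2 * m + 3) ^ 2)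
        (2 * (m + 1) * (m * (m + 2)) * (mu / (lam + 2 * mu)) / (2 * m + 3) ^ 2)
        (2 * (m + 2) ^ 2 * (m + 3) * (mu / (lam + 2 * mu)) / (2 * m + 3) ^ 2)
        (-(m + 2) ^ 2 / (2 * m + 3) ^ 2)) (Real.sqrt_pos.2 hL)
  obtain ⟨C, hC, hbound⟩ := (hs.add hp).exists_pos
  obtain ⟨δ, hδ, hsub⟩ := mem_nhdsGT_iff_exists_Ioo_subset.1 hbound.bound
  refine ⟨δ, hδ, C, hC, fun k hk hkδ => ?_⟩
  have hle := hsub ⟨hk, hkδ⟩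
  simp only [Set.mem_ofPred_eq] at hle
  rw [Real.norm_of_nonneg (by positivity : (0 : ℝ) ≤ k ^ 3)] at hle
  refine le_trans (le_of_eq ?_) hle
  congr 1
  -- The two `k ^ (-2)` singularities cancel because `μ k_s ^ 2 = (λ + 2 μ) k_p ^ 2`.
  have hks : ((ksC mu k) ^ 2)⁻¹ = mu / (k : ℂ) ^ 2 := by
    have : (k / Real.sqrt mu) ^ 2 = k ^ 2 / mu := by rw [div_pow, Real.sq_sqrt hmu.le]
    rw [ksC, ← Complex.ofReal_pow, this]
    push_cast
    rw [inv_div]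
  have hkp : ((kpC lam mu k) ^ 2)⁻¹ = (lam + 2 * mu) / (k : ℂ) ^ 2 := by
    have : (k / Real.sqrt (lam + 2 * mu)) ^ 2 = k ^ 2 / (lam + 2 * mu) := by
      rw [div_pow, Real.sq_sqrt hL.le]
    rw [kpC, ← Complex.ofReal_pow, this]
    push_cast
    rw [inv_div]
  change _ = _ - (_ * ((ksC mu k) ^ 2)⁻¹ + _ + _ * (ksC mu k) ^ 2) +
    (_ - (_ * ((kpC lam mu k) ^ 2)⁻¹ + _ + _ * (kpC lam mu k) ^ 2))
  rw [rhoN_eq, combCoeff_shear, combCoeff_pressure, hks, hkp]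
  change _ = besselComb _ _ _ _ _ _ _ (ksC mu k) - _ +
    (besselComb _ _ _ _ _ _ _ (kpC lam mu k) - _)
  generalize besselComb _ _ _ _ _ _ _ (ksC mu k) = X
  generalize besselComb _ _ _ _ _ _ _ (kpC lam mu k) = Y
  generalize ksC mu k = s
  generalize kpC lam mu k = p
  have hk0 : (k : ℂ) ≠ 0 := by exact_mod_cast hk.ne'
  push_cast
  have e3 : 2 * ((m : ℂ) + 1) + 1 = 2 * m + 3 := by ring
  have e5 : 2 * ((m : ℂ) + 1) + 3 = 2 * m + 5 := by ring
  have e7 : 2 * ((m : ℂ) + 1) + 5 = 2 * m + 7 := by ring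
  have e1 : 2 * ((m : ℂ) + 1) - 1 = 2 * m + 1 := by ring
  have e_1 : 2 * ((m : ℂ) + 1) - 3 = 2 * m - 1 := by ring
  rw [e3, e5, e7, e1, e_1]
  obtain ⟨L, hLdef⟩ : ∃ L : ℂ, L = lam + 2 * mu := ⟨_, rfl⟩
  rw [← hLdef] at hLC ⊢
  have hlam : (lam : ℂ) = L - 2 * mu := by rw [hLdef]; ring
  rw [hlam]
  field_simp
  ring
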